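/- Let K₁, K₂ > 0, ϑ ∈ (0, π/2), t = tan ϑ, and let 𝒫, 𝒬, ℛ be as in the quadratic form of the steepest-descent-path equation. Then for every u ∈ (0, π) the discriminant Δ(u) = 𝒬(u)² − 𝒫(u)·ℛ(u) satisfies the identity Δ(u) = ((s₁⋆s₂)²/4)·cos²(ut)·[X₁(u) + X₂(u)·sin²(u)], where X₁(u) = (cos(2u) − cos(2ut))² and X₂(u) = 4(c₁⋆c₂)²·sin²(ut) + 2((s₁⋆s₂)² − 1)·(cos(2ut) − cos(2u)); moreover Δ(u) ≥ 0 for all u ∈ (0, π), and Δ(u) = 0 if and only if cos(ut) = 0, i.e. if and only if u = (2n+1)π/(2t) for some integer n ≥ 0. -/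

import Mathlib

open Real Filter Set

/-- `𝒜(u,v) = c₁⋆c₂ − s₁⋆s₂ cos u cosh v`. -/
noncomputable def calA (K₁s K₂ u v : ℝ) : ℝ :=
  Real.cosh (2 * K₁s) * Real.cosh (2 * K₂)
    - Real.sinh (2 * K₁s) * Real.sinh (2 * K₂) * Real.cos u * Real.cosh v

/-- `ℬ(u,v) = s₁⋆s₂ sin u sinh v`. -/
noncomputable def calB (K₁s K₂ u v : ℝ) : ℝ :=
  Real.sinh (2 * K₁s) * Real.sinh (2 * K₂) * Real.sin u * Real.sinh v

/-- `𝒫(u) = (s₁⋆s₂)² sin(u(1−t)) sin(u(1+t))`. -/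
noncomputable def calP (K₁s K₂ t u : ℝ) : ℝ :=
  (Real.sinh (2 * K₁s) * Real.sinh (2 * K₂)) ^ 2
    * Real.sin (u * (1 - t)) * Real.sin (u * (1 + t))

/-- `𝒬(u) = s₁⋆s₂ c₁⋆c₂ cos u sin²(ut)`. -/
noncomputable def calQ (K₁s K₂ t u : ℝ) : ℝ :=
  Real.sinh (2 * K₁s) * Real.sinh (2 * K₂)
    * (Real.cosh (2 * K₁s) * Real.cosh (2 * K₂)) * Real.cos u * Real.sin (u * t) ^ 2

/-- `ℛ(u) = −(c₁⋆c₂)² sin²(ut) − (s₁⋆s₂)² sin²u cos²(ut) + sin²(ut) cos²(ut)`. -/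
noncomputable def calR (K₁s K₂ t u : ℝ) : ℝ :=
  -(Real.cosh (2 * K₁s) * Real.cosh (2 * K₂)) ^ 2 * Real.sin (u * t) ^ 2
    - (Real.sinh (2 * K₁s) * Real.sinh (2 * K₂)) ^ 2 * Real.sin u ^ 2 * Real.cos (u * t) ^ 2
    + Real.sin (u * t) ^ 2 * Real.cos (u * t) ^ 2

/-!
With `a = sin² u` and `b = sin² (ut)`, the Pythagorean identities `cosh² = 1 + sinh²` make the
bracket of the discriminant formula split into two nonnegative factors,
`X₁ + X₂ a = 4 (b + sinh² (2K₁⋆) a) (b + sinh² (2K₂) a)`.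
For nonzero couplings each factor vanishes only if `sin u` and `sin (ut)` both do, so off such
points the zeros of the discriminant are those of `cos (ut)`.
-/

/-- The discriminant `Δ(u) = 𝒬(u)² − 𝒫(u)ℛ(u)` of `𝒫 x² + 2𝒬 x + ℛ`, that is, a quarter of
Mathlib's `discrim (𝒫 u) (2 * 𝒬 u) (ℛ u)`. -/
noncomputable def calDelta (K₁s K₂ t u : ℝ) : ℝ :=
  calQ K₁s K₂ t u ^ 2 - calP K₁s K₂ t u * calR K₁s K₂ t u

/-- The coupling-free term `X₁(u)` of the discriminant formula. -/
noncomputable def calX₁ (t u : ℝ) : ℝ :=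
  (cos (2 * u) - cos (2 * (u * t))) ^ 2

/-- The coefficient `X₂(u)` of `sin² u` in the discriminant formula. -/
noncomputable def calX₂ (K₁s K₂ t u : ℝ) : ℝ :=
  4 * (cosh (2 * K₁s) * cosh (2 * K₂)) ^ 2 * sin (u * t) ^ 2
    + 2 * ((sinh (2 * K₁s) * sinh (2 * K₂)) ^ 2 - 1) * (cos (2 * (u * t)) - cos (2 * u))

theorem sin_sub_mul_sin_add (x y : ℝ) : sin (x - y) * sin (x + y) = sin x ^ 2 - sin y ^ 2 := by
  rw [sin_sub, sin_add]
  linear_combination sin x ^ 2 * cos_sq' y - sin y ^ 2 * cos_sq' x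

theorem tanh_pos_iff {x : ℝ} : 0 < tanh x ↔ 0 < x := by
  rw [tanh_eq_sinh_div_cosh, div_pos_iff_of_pos_right (cosh_pos x), sinh_pos_iff]

theorem sq_add_sq_mul_sq_eq_zero_iff {R : Type*} [Ring R] [LinearOrder R] [IsStrictOrderedRing R]
    {a x y : R} (ha : a ≠ 0) : x ^ 2 + a ^ 2 * y ^ 2 = 0 ↔ x = 0 ∧ y = 0 := by
  rw [add_eq_zero_iff_of_nonneg (sq_nonneg x) (mul_nonneg (sq_nonneg a) (sq_nonneg y))]
  simp [ha]

theorem cos_eq_zero_iff_exists_nat {x : ℝ} (hx : -(π / 2) < x) :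
    cos x = 0 ↔ ∃ n : ℕ, x = (2 * n + 1) * π / 2 := by
  rw [cos_eq_zero_iff]
  constructor
  · rintro ⟨k, rfl⟩
    have hk : (-1 : ℝ) < k := by nlinarith [pi_pos]
    have hk₀ : 0 ≤ k := Int.add_one_le_iff.mpr (by exact_mod_cast hk)
    lift k to ℕ using hk₀
    exact ⟨k, by norm_cast⟩
  · rintro ⟨n, rfl⟩
    exact ⟨n, by norm_cast⟩

theorem calP_eq (K₁s K₂ t u : ℝ) :
    calP K₁s K₂ t u
      = (sinh (2 * K₁s) * sinh (2 * K₂)) ^ 2 * (sin u ^ 2 - sin (u * t) ^ 2) := by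
  rw [calP, mul_assoc, mul_sub, mul_add, mul_one, sin_sub_mul_sin_add]

theorem calX₁_add_calX₂_mul_sin_sq (K₁s K₂ t u : ℝ) :
    calX₁ t u + calX₂ K₁s K₂ t u * sin u ^ 2
      = 4 * ((sin (u * t) ^ 2 + sinh (2 * K₁s) ^ 2 * sin u ^ 2)
        * (sin (u * t) ^ 2 + sinh (2 * K₂) ^ 2 * sin u ^ 2)) := by
  rw [calX₁, calX₂, cos_two_mul_eq_one_sub u, cos_two_mul_eq_one_sub (u * t),
    mul_pow (cosh _), cosh_sq, cosh_sq]
  ring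

theorem calDelta_eq_prod (K₁s K₂ t u : ℝ) :
    calDelta K₁s K₂ t u
      = (sinh (2 * K₁s) * sinh (2 * K₂)) ^ 2 * cos (u * t) ^ 2
        * ((sin (u * t) ^ 2 + sinh (2 * K₁s) ^ 2 * sin u ^ 2)
          * (sin (u * t) ^ 2 + sinh (2 * K₂) ^ 2 * sin u ^ 2)) := by
  rw [calDelta, calP_eq, calQ, calR]
  simp only [mul_pow, neg_mul, cosh_sq, cos_sq']
  ring

theorem calDelta_eq (K₁s K₂ t u : ℝ) :
    calDelta K₁s K₂ t u
      = (sinh (2 * K₁s) * sinh (2 * K₂)) ^ 2 / 4 * cos (u * t) ^ 2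
        * (calX₁ t u + calX₂ K₁s K₂ t u * sin u ^ 2) := by
  rw [calDelta_eq_prod, calX₁_add_calX₂_mul_sin_sq]
  ring

theorem calDelta_nonneg (K₁s K₂ t u : ℝ) : 0 ≤ calDelta K₁s K₂ t u := by
  rw [calDelta_eq_prod]
  positivity

theorem calDelta_eq_zero_iff {K₁s K₂ : ℝ} (hK₁s : K₁s ≠ 0) (hK₂ : K₂ ≠ 0) (t u : ℝ) :
    calDelta K₁s K₂ t u = 0 ↔ cos (u * t) = 0 ∨ sin (u * t) = 0 ∧ sin u = 0 := by
  have hs₁ : sinh (2 * K₁s) ≠ 0 := by simpa using hK₁s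
  have hs₂ : sinh (2 * K₂) ≠ 0 := by simpa using hK₂
  rw [calDelta_eq_prod, mul_eq_zero, mul_eq_zero, mul_eq_zero,
    sq_add_sq_mul_sq_eq_zero_iff hs₁, sq_add_sq_mul_sq_eq_zero_iff hs₂, or_self]
  simp [hs₁, hs₂]

theorem statement_15_general {K₁s K₂ t u : ℝ} (hK₁s : K₁s ≠ 0) (hK₂ : K₂ ≠ 0)
    (hut : 0 < u * t) (hsin : sin (u * t) ≠ 0 ∨ sin u ≠ 0) :
    calDelta K₁s K₂ t u
        = (sinh (2 * K₁s) * sinh (2 * K₂)) ^ 2 / 4 * cos (u * t) ^ 2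
          * (calX₁ t u + calX₂ K₁s K₂ t u * sin u ^ 2) ∧
      0 ≤ calDelta K₁s K₂ t u ∧
      (calDelta K₁s K₂ t u = 0 ↔ cos (u * t) = 0) ∧
      (cos (u * t) = 0 ↔ ∃ n : ℕ, u = (2 * n + 1) * π / (2 * t)) := by
  refine ⟨calDelta_eq K₁s K₂ t u, calDelta_nonneg K₁s K₂ t u, ?_, ?_⟩
  · rw [calDelta_eq_zero_iff hK₁s hK₂, or_iff_left (not_and_or.mpr hsin)]
  · have ht : t ≠ 0 := right_ne_zero_of_mul hut.ne'
    rw [cos_eq_zero_iff_exists_nat (by linarith [pi_pos])]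
    simp only [← div_div, eq_div_iff ht]

theorem statement_15 (K₁ K₂ K₁s K₂s : ℝ) (hK₁ : 0 < K₁) (hK₂ : 0 < K₂)
    (hdual₁ : Real.tanh K₁s = Real.exp (-(2 * K₁)))
    (hdual₂ : Real.tanh K₂s = Real.exp (-(2 * K₂)))
    (ϑ : ℝ) (hϑ : ϑ ∈ Set.Ioo (0 : ℝ) (π / 2)) :
    ∀ u ∈ Set.Ioo (0 : ℝ) π,
      calQ K₁s K₂ (Real.tan ϑ) u ^ 2
          - calP K₁s K₂ (Real.tan ϑ) u * calR K₁s K₂ (Real.tan ϑ) u =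
        (Real.sinh (2 * K₁s) * Real.sinh (2 * K₂)) ^ 2 / 4
          * Real.cos (u * Real.tan ϑ) ^ 2
          * ((Real.cos (2 * u) - Real.cos (2 * (u * Real.tan ϑ))) ^ 2
            + (4 * (Real.cosh (2 * K₁s) * Real.cosh (2 * K₂)) ^ 2
                  * Real.sin (u * Real.tan ϑ) ^ 2
                + 2 * ((Real.sinh (2 * K₁s) * Real.sinh (2 * K₂)) ^ 2 - 1)
                  * (Real.cos (2 * (u * Real.tan ϑ)) - Real.cos (2 * u)))
              * Real.sin u ^ 2) ∧
      0 ≤ calQ K₁s K₂ (Real.tan ϑ) u ^ 2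
          - calP K₁s K₂ (Real.tan ϑ) u * calR K₁s K₂ (Real.tan ϑ) u ∧
      (calQ K₁s K₂ (Real.tan ϑ) u ^ 2
          - calP K₁s K₂ (Real.tan ϑ) u * calR K₁s K₂ (Real.tan ϑ) u = 0 ↔
        Real.cos (u * Real.tan ϑ) = 0) ∧
      (Real.cos (u * Real.tan ϑ) = 0 ↔
        ∃ n : ℕ, u = (2 * (n : ℝ) + 1) * π / (2 * Real.tan ϑ)) :=
  fun _ hu => statement_15_general (tanh_pos_iff.mp (hdual₁ ▸ exp_pos _)).ne' hK₂.ne'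
    (mul_pos hu.1 (tan_pos_of_pos_of_lt_pi_div_two hϑ.1 hϑ.2)) (.inr (sin_pos_of_mem_Ioo hu).ne')
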